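/- (Modularity) Let φ be a CTL formula, V ⊆ 𝒜 a set of atoms, and p an atom with p ∉ V. If ψ_1 is a result of forgetting {p} from φ, ψ_2 is a result of forgetting V from ψ_1, and ψ is a result of forgetting {p} ∪ V from φ, then ψ ≡ ψ_2. -/

import Mathlib

universe u

/-- A Kripke structure over a set of atoms: a finite nonempty set of states,
a serial transition relation, and a labeling function. -/
structure Kripke (Atom : Type u) where
  State : Type u
  stateFinite : Finite State
  stateNonempty : Nonempty State
  R : State → State → Prop
  serial : ∀ s, ∃ t, R s t
  L : State → Set Atom

instance {Atom : Type u} (M : Kripke Atom) : Finite M.State := M.stateFinite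

/-- A K-structure: a Kripke structure together with one of its states. -/
structure KStruct (Atom : Type u) where
  M : Kripke Atom
  s : M.State

/-- An initial structure: a Kripke structure with an initial state `s0`,
i.e. a state admitting a path visiting every state. -/
structure InitKripke (Atom : Type u) extends Kripke Atom where
  s0 : State
  initial : ∃ π : ℕ → State, π 0 = s0 ∧ (∀ n, R (π n) (π (n + 1))) ∧ ∀ t, ∃ n, π n = t

/-- The (initial) K-structure associated to an initial structure. -/
def InitKripke.toKS {Atom : Type u} (M : InitKripke Atom) : KStruct Atom :=
  ⟨M.toKripke, M.s0⟩

/-- The approximations `B_n^V` of `V`-bisimilarity on K-structures. -/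
def BRel {Atom : Type u} (V : Set Atom) : ℕ → KStruct Atom → KStruct Atom → Prop
  | 0 => fun K1 K2 => K1.M.L K1.s \ V = K2.M.L K2.s \ V
  | n + 1 => fun K1 K2 =>
      K1.M.L K1.s \ V = K2.M.L K2.s \ V ∧
      (∀ t1, K1.M.R K1.s t1 → ∃ t2, K2.M.R K2.s t2 ∧ BRel V n ⟨K1.M, t1⟩ ⟨K2.M, t2⟩) ∧
      (∀ t2, K2.M.R K2.s t2 → ∃ t1, K1.M.R K1.s t1 ∧ BRel V n ⟨K1.M, t1⟩ ⟨K2.M, t2⟩)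

/-- `V`-bisimilarity `K1 ↔_V K2` of K-structures. -/
def VBisim {Atom : Type u} (V : Set Atom) (K1 K2 : KStruct Atom) : Prop :=
  ∀ n, BRel V n K1 K2

/-- CTL formulas in existential normal form. -/
inductive CTL (Atom : Type u) : Type u
  | bot  : CTL Atom
  | top  : CTL Atom
  | atom (p : Atom) : CTL Atom
  | neg  (φ : CTL Atom) : CTL Atom
  | or   (φ ψ : CTL Atom) : CTL Atom
  | EX   (φ : CTL Atom) : CTL Atom
  | EG   (φ : CTL Atom) : CTL Atom
  | EU   (φ ψ : CTL Atom) : CTL Atom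

namespace CTL
variable {Atom : Type u}

def and (φ ψ : CTL Atom) : CTL Atom := .neg (.or (.neg φ) (.neg ψ))
def imp (φ ψ : CTL Atom) : CTL Atom := .or (.neg φ) ψ
def iff (φ ψ : CTL Atom) : CTL Atom := (φ.imp ψ).and (ψ.imp φ)
def AX (φ : CTL Atom) : CTL Atom := .neg (.EX (.neg φ))
def EF (φ : CTL Atom) : CTL Atom := .EU .top φ
def AF (φ : CTL Atom) : CTL Atom := .neg (.EG (.neg φ))
def AG (φ : CTL Atom) : CTL Atom := .neg (.EU .top (.neg φ))

/-- The set of atoms occurring in a formula. -/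
def vars : CTL Atom → Set Atom
  | .bot => ∅
  | .top => ∅
  | .atom p => {p}
  | .neg φ => vars φ
  | .or φ ψ => vars φ ∪ vars ψ
  | .EX φ => vars φ
  | .EG φ => vars φ
  | .EU φ ψ => vars φ ∪ vars ψ

end CTL

/-- The standard CTL satisfaction relation `(M,s) ⊨ φ`. -/
def Sat {Atom : Type u} (M : Kripke Atom) : CTL Atom → M.State → Prop
  | .bot => fun _ => False
  | .top => fun _ => True
  | .atom p => fun s => p ∈ M.L s
  | .neg φ => fun s => ¬ Sat M φ s
  | .or φ ψ => fun s => Sat M φ s ∨ Sat M ψ s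
  | .EX φ => fun s => ∃ t, M.R s t ∧ Sat M φ t
  | .EG φ => fun s => ∃ π : ℕ → M.State, π 0 = s ∧ (∀ n, M.R (π n) (π (n + 1))) ∧
      ∀ n, Sat M φ (π n)
  | .EU φ ψ => fun s => ∃ π : ℕ → M.State, π 0 = s ∧ (∀ n, M.R (π n) (π (n + 1))) ∧
      ∃ i, Sat M ψ (π i) ∧ ∀ j < i, Sat M φ (π j)

/-- Satisfaction for K-structures. -/
def KSat {Atom : Type u} (K : KStruct Atom) (φ : CTL Atom) : Prop := Sat K.M φ K.s

/-- The set of models (initial K-structures) of a formula. -/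
def CTLMod {Atom : Type u} (φ : CTL Atom) : Set (InitKripke Atom) :=
  {M | Sat M.toKripke φ M.s0}

def Entails {Atom : Type u} (φ ψ : CTL Atom) : Prop := CTLMod φ ⊆ CTLMod ψ

def CTLEquiv {Atom : Type u} (φ ψ : CTL Atom) : Prop := CTLMod φ = CTLMod ψ

/-- `IR φ V`: φ is irrelevant to the atoms in V. -/
def IR {Atom : Type u} (φ : CTL Atom) (V : Set Atom) : Prop :=
  ∃ ψ : CTL Atom, CTL.vars ψ ∩ V = ∅ ∧ CTLEquiv φ ψ

/-- `V`-bisimilarity of depth-`n` computation trees rooted at `s1` (in `M1`) and `s2` (in `M2`). -/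
def TreeBisim {Atom : Type u} (V : Set Atom) (M1 M2 : Kripke Atom) :
    ℕ → M1.State → M2.State → Prop
  | 0 => fun s1 s2 => M1.L s1 \ V = M2.L s2 \ V
  | n + 1 => fun s1 s2 =>
      M1.L s1 \ V = M2.L s2 \ V ∧
      (∀ t1, M1.R s1 t1 → ∃ t2, M2.R s2 t2 ∧ TreeBisim V M1 M2 n t1 t2) ∧
      (∀ t2, M2.R s2 t2 → ∃ t1, M1.R s1 t1 ∧ TreeBisim V M1 M2 n t1 t2)

/-- Finite conjunction of a list of formulas. -/
def andList {Atom : Type u} : List (CTL Atom) → CTL Atom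
  | [] => .top
  | φ :: l => φ.and (andList l)

/-- Finite disjunction of a list of formulas. -/
def orList {Atom : Type u} : List (CTL Atom) → CTL Atom
  | [] => .bot
  | φ :: l => .or φ (orList l)

/-- A list enumerating a subset of a finite type. -/
noncomputable def setToList {α : Type u} [Finite α] (s : Set α) : List α :=
  s.toFinite.toFinset.toList

/-- The list of `R`-successors of a state. -/
noncomputable def Kripke.succList {Atom : Type u} (M : Kripke Atom) (s : M.State) :
    List M.State :=
  setToList {t | M.R s t}

/-- The characterizing formula `F_V(Tr_0(s))` of the depth-0 computation tree. -/
noncomputable def charTree0 {Atom : Type u} [Finite Atom] (M : Kripke Atom) (V : Set Atom)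
    (s : M.State) : CTL Atom :=
  (andList ((setToList (V ∩ M.L s)).map CTL.atom)).and
    (andList ((setToList (V \ M.L s)).map fun q => CTL.neg (CTL.atom q)))

/-- The characterizing formula `F_V(Tr_n(s))` of the depth-`n` computation tree of `s`. -/
noncomputable def charTree {Atom : Type u} [Finite Atom] (M : Kripke Atom) (V : Set Atom) :
    ℕ → M.State → CTL Atom
  | 0 => fun s => charTree0 M V s
  | k + 1 => fun s =>
      (andList ((M.succList s).map fun t => CTL.EX (charTree M V k t))).and
        ((CTL.AX (orList ((M.succList s).map (charTree M V k)))).and (charTree0 M V s))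

/-- `dis_V(M,s,s',k)`: `s` and `s'` are `V`-distinguishable, and `k` is the least depth at which
their computation trees fail to be `(𝒜∖V)`-bisimilar. -/
def dis {Atom : Type u} (M : Kripke Atom) (V : Set Atom) (s s' : M.State) (k : ℕ) : Prop :=
  ¬ VBisim Vᶜ ⟨M, s⟩ ⟨M, s'⟩ ∧
  IsLeast {n | ¬ TreeBisim Vᶜ M M n s s'} k

/-- The characterization number `ch(M,V)`. -/
noncomputable def ch {Atom : Type u} (M : Kripke Atom) (V : Set Atom) : ℕ :=
  letI := Classical.dec (∃ s s' k, dis M V s s' k)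
  if ∃ s s' k, dis M V s s' k then
    sSup {k | ∃ s s', dis M V s s' k}
  else
    sInf {k | (fun s s' : M.State => BRel Vᶜ k ⟨M, s⟩ ⟨M, s'⟩) =
              (fun s s' : M.State => BRel Vᶜ (k + 1) ⟨M, s⟩ ⟨M, s'⟩)}

/-- The characterizing formula `F_V(M,s0)` of an initial K-structure on `V`. -/
noncomputable def charForm {Atom : Type u} [Finite Atom] (M : InitKripke Atom) (V : Set Atom) :
    CTL Atom :=
  let T : M.State → CTL Atom := fun s => charTree M.toKripke V (ch M.toKripke V) s
  (T M.s0).and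
    (andList ((setToList (Set.univ : Set M.State)).map fun s =>
      CTL.AG ((T s).imp
        ((andList ((M.toKripke.succList s).map fun t => CTL.EX (T t))).and
          (CTL.AX (orList ((M.toKripke.succList s).map T)))))))

/-- `ψ` is a result of forgetting `V` from `φ`. -/
def IsForget {Atom : Type u} (φ : CTL Atom) (V : Set Atom) (ψ : CTL Atom) : Prop :=
  CTL.vars ψ ∩ V = ∅ ∧
  CTLMod ψ = {K : InitKripke Atom | ∃ K' ∈ CTLMod φ, VBisim V K'.toKS K.toKS}

/-!
Only one inclusion is difficult: if `J` satisfies `φ` and is `(V₁ ∪ V₂)`-bisimilar to `K`, then `K`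
satisfies `ψ₂`. A structure that is `V₁`-bisimilar to `J` and `V₂`-bisimilar to `K` would settle
this, but such a structure need not be initial. Instead `J` and `K` are unravelled into pulse
structures, in which the atoms of `V₁` lose their original meaning and hold only at isolated pulses
on loops. The distance between consecutive pulses encodes the loop, and all distances are too long
for `ψ₂` to count, so `ψ₂` does not distinguish the two pulse structures. On the other hand, an atom
of `V₁ \ V₂` makes the distances visible outside `V₂`, and by initiality they then determine the
states of `K`. Hence the labels of `K` can be restored, by changing atoms of `V₁` alone, in any
structure that is `V₂`-bisimilar to the pulse structure over `K`.
-/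

section Bisimilarity

variable {Atom : Type u} {V V₁ V₂ : Set Atom}

theorem BRel.refl (V : Set Atom) (n : ℕ) (A : KStruct Atom) : BRel V n A A := by
  induction n generalizing A with
  | zero => exact rfl
  | succ n ih => exact ⟨rfl, fun t ht => ⟨t, ht, ih _⟩, fun t ht => ⟨t, ht, ih _⟩⟩

theorem BRel.symm {n : ℕ} {A B : KStruct Atom} (h : BRel V n A B) : BRel V n B A := by
  induction n generalizing A B with
  | zero => exact Eq.symm h
  | succ n ih =>
    exact ⟨h.1.symm, fun t ht => (h.2.2 t ht).imp fun _ => And.imp_right ih,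
      fun t ht => (h.2.1 t ht).imp fun _ => And.imp_right ih⟩

theorem sdiff_union_eq_of_sdiff_eq {α : Type*} {X Y Z V₁ V₂ : Set α} (h₁ : X \ V₁ = Y \ V₁)
    (h₂ : Y \ V₂ = Z \ V₂) : X \ (V₁ ∪ V₂) = Z \ (V₁ ∪ V₂) := by
  rw [← Set.sdiff_sdiff, h₁, Set.sdiff_sdiff_comm, h₂, Set.sdiff_sdiff, Set.union_comm]

theorem BRel.trans_union {n : ℕ} {A B C : KStruct Atom} (h : BRel V₁ n A B) (k : BRel V₂ n B C) :
    BRel (V₁ ∪ V₂) n A C := by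
  induction n generalizing A B C with
  | zero => exact sdiff_union_eq_of_sdiff_eq h k
  | succ n ih =>
    refine ⟨sdiff_union_eq_of_sdiff_eq h.1 k.1, fun t ht => ?_, fun t ht => ?_⟩
    · obtain ⟨t', ht', hb⟩ := h.2.1 t ht
      exact (k.2.1 t' ht').imp fun _ => And.imp_right (ih hb)
    · obtain ⟨t', ht', hb⟩ := k.2.2 t ht
      exact (h.2.2 t' ht').imp fun _ => And.imp_right fun hb' => ih hb' hb

theorem BRel.of_le {m n : ℕ} (hmn : m ≤ n) {A B : KStruct Atom} (h : BRel V n A B) :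
    BRel V m A B := by
  induction n generalizing m A B with
  | zero => rwa [Nat.le_zero.mp hmn]
  | succ n ih =>
    cases m with
    | zero => exact h.1
    | succ m =>
      have hmn : m ≤ n := Nat.le_of_succ_le_succ hmn
      exact ⟨h.1, fun t ht => (h.2.1 t ht).imp fun _ => And.imp_right (ih hmn),
        fun t ht => (h.2.2 t ht).imp fun _ => And.imp_right (ih hmn)⟩

namespace VBisim

theorem refl (V : Set Atom) (A : KStruct Atom) : VBisim V A A :=
  fun n => BRel.refl V n A

theorem symm {A B : KStruct Atom} (h : VBisim V A B) : VBisim V B A :=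
  fun n => (h n).symm

theorem trans_union {A B C : KStruct Atom} (h : VBisim V₁ A B) (k : VBisim V₂ B C) :
    VBisim (V₁ ∪ V₂) A C :=
  fun n => (h n).trans_union (k n)

theorem trans {A B C : KStruct Atom} (h : VBisim V A B) (k : VBisim V B C) : VBisim V A C :=
  Set.union_self V ▸ h.trans_union k

theorem mem_label_iff {A B : KStruct Atom} (h : VBisim V A B) {q : Atom} (hq : q ∉ V) :
    q ∈ A.M.L A.s ↔ q ∈ B.M.L B.s := by
  simpa [hq] using Set.ext_iff.mp (h 0) q

variable {A B : Kripke Atom}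

theorem forth {s s' : A.State} {t : B.State} (h : VBisim V ⟨A, s⟩ ⟨B, t⟩) (hs : A.R s s') :
    ∃ t', B.R t t' ∧ VBisim V ⟨A, s'⟩ ⟨B, t'⟩ := by
  have happrox : ∀ n, ∃ t', B.R t t' ∧ BRel V n ⟨A, s'⟩ ⟨B, t'⟩ := fun n => (h (n + 1)).2.1 s' hs
  choose f hfR hf using happrox
  -- `B` being finite, a single successor serves infinitely many approximations, hence all.
  obtain ⟨t', ht'⟩ := Finite.exists_infinite_fiber f
  have hinf : (f ⁻¹' {t'}).Infinite := Set.infinite_coe_iff.mp ht'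
  obtain ⟨m, rfl⟩ := hinf.nonempty
  refine ⟨f m, hfR m, fun n => ?_⟩
  obtain ⟨k, hk, hnk⟩ := hinf.exists_gt n
  exact BRel.of_le hnk.le (Set.mem_singleton_iff.mp hk ▸ hf k)

theorem of_isBisimulation (Z : A.State → B.State → Prop)
    (label : ∀ s t, Z s t → A.L s \ V = B.L t \ V)
    (forth : ∀ s t s', Z s t → A.R s s' → ∃ t', B.R t t' ∧ Z s' t')
    (back : ∀ s t t', Z s t → B.R t t' → ∃ s', A.R s s' ∧ Z s' t')
    {s : A.State} {t : B.State} (h : Z s t) : VBisim V ⟨A, s⟩ ⟨B, t⟩ := by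
  intro n
  induction n generalizing s t with
  | zero => exact label s t h
  | succ n ih =>
    exact ⟨label s t h, fun s' hs => (forth s t s' h hs).imp fun _ => And.imp_right ih,
      fun t' ht => (back s t t' h ht).imp fun _ => And.imp_right ih⟩

theorem transGen_forth {s s' : A.State} {t : B.State} (h : VBisim V ⟨A, s⟩ ⟨B, t⟩)
    (hs : Relation.TransGen A.R s s') :
    ∃ t', Relation.TransGen B.R t t' ∧ VBisim V ⟨A, s'⟩ ⟨B, t'⟩ := by
  induction hs with
  | single hs => exact (h.forth hs).imp fun _ => And.imp_left .single
  | tail _ hs ih =>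
    obtain ⟨t', ht', hb⟩ := ih
    exact (hb.forth hs).imp fun _ => And.imp_left ht'.tail

theorem exists_path {π : ℕ → A.State} (hπ : ∀ n, A.R (π n) (π (n + 1))) {t : B.State}
    (h : VBisim V ⟨A, π 0⟩ ⟨B, t⟩) :
    ∃ ρ : ℕ → B.State, ρ 0 = t ∧ (∀ n, B.R (ρ n) (ρ (n + 1))) ∧
      ∀ n, VBisim V ⟨A, π n⟩ ⟨B, ρ n⟩ := by
  choose! next hnext hbisim using
    fun n (t : B.State) (ht : VBisim V ⟨A, π n⟩ ⟨B, t⟩) => ht.forth (hπ n)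
  let ρ : ℕ → B.State := fun n => Nat.rec t next n
  have hρ : ∀ n, VBisim V ⟨A, π n⟩ ⟨B, ρ n⟩ := fun n => Nat.rec h (fun n ih => hbisim n _ ih) n
  exact ⟨ρ, rfl, fun n => hnext n _ (hρ n), hρ⟩

end VBisim

/-- `V`-bisimilarity as an equivalence relation on K-structures. -/
def bisimSetoid (V : Set Atom) : Setoid (KStruct Atom) where
  r := VBisim V
  iseqv := ⟨VBisim.refl V, VBisim.symm, VBisim.trans⟩

/-- The `V`-bisimilarity class of a state; classes of states of different Kripke structures are
comparable. -/
def bisimClass (V : Set Atom) (A : Kripke Atom) (s : A.State) : Quotient (bisimSetoid V) :=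
  Quotient.mk _ ⟨A, s⟩

theorem bisimClass_eq {A B : Kripke Atom} {s : A.State} {t : B.State} :
    bisimClass V A s = bisimClass V B t ↔ VBisim V ⟨A, s⟩ ⟨B, t⟩ :=
  Quotient.eq (r := bisimSetoid V)

theorem exists_step_bisimClass_eq {A B : Kripke Atom} {s s' : A.State} {t : B.State}
    (h : bisimClass V A s = bisimClass V B t) (hs : A.R s s') :
    ∃ t', B.R t t' ∧ bisimClass V A s' = bisimClass V B t' := by
  obtain ⟨t', ht', hb⟩ := (bisimClass_eq.mp h).forth hs
  exact ⟨t', ht', bisimClass_eq.mpr hb⟩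

end Bisimilarity

section Paths

open Relation

variable {S : Type*} {R : S → S → Prop}

theorem exists_path_of_forall_exists {X : Set S} (h : ∀ x ∈ X, ∃ y ∈ X, R x y) {x : S}
    (hx : x ∈ X) :
    ∃ π : ℕ → S, π 0 = x ∧ (∀ n, R (π n) (π (n + 1))) ∧ ∀ n, π n ∈ X := by
  choose! next hnextX hnext using h
  let π : ℕ → S := fun n => next^[n] x
  have hπ : ∀ n, π (n + 1) = next (π n) := fun n => Function.iterate_succ_apply' next n x
  have hX : ∀ n, π n ∈ X := fun n => Nat.rec hx (fun n ih => hπ n ▸ hnextX _ ih) n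
  exact ⟨π, rfl, fun n => hπ n ▸ hnext _ (hX n), hX⟩

theorem exists_path_of_forall_exists_transGen {X : Set S} (h : ∀ x ∈ X, ∃ y ∈ X, TransGen R x y)
    {x : S} (hx : x ∈ X) : ∃ π : ℕ → S, π 0 = x ∧ ∀ n, R (π n) (π (n + 1)) := by
  have hstep : ∀ z ∈ {z | ∃ y ∈ X, ReflTransGen R z y}, ∃ z' ∈ {z | ∃ y ∈ X, ReflTransGen R z y},
      R z z' := by
    rintro z ⟨y, hy, hzy⟩
    obtain rfl | ⟨z', hz, hz'⟩ := hzy.cases_head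
    · obtain ⟨y', hy', hyy'⟩ := h z hy
      obtain ⟨z', hz, hz'⟩ := TransGen.head'_iff.mp hyy'
      exact ⟨z', ⟨y', hy', hz'⟩, hz⟩
    · exact ⟨z', ⟨y, hy, hz'⟩, hz⟩
  obtain ⟨π, hπ0, hπ, -⟩ := exists_path_of_forall_exists hstep ⟨x, hx, .refl⟩
  exact ⟨π, hπ0, hπ⟩

theorem transGen_of_path {π : ℕ → S} (hπ : ∀ n, R (π n) (π (n + 1))) {m n : ℕ} (hmn : m < n) :
    TransGen R (π m) (π n) := by
  induction n, hmn using Nat.le_induction with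
  | base => exact .single (hπ m)
  | succ n _ ih => exact ih.tail (hπ n)

theorem reflTransGen_of_path {π : ℕ → S} (hπ : ∀ n, R (π n) (π (n + 1))) {m n : ℕ}
    (hmn : m ≤ n) : ReflTransGen R (π m) (π n) := by
  obtain rfl | hmn := hmn.eq_or_lt
  exacts [.refl, (transGen_of_path hπ hmn).to_reflTransGen]

theorem exists_transGen_self [Finite S] {X : Set S} (h : ∀ x ∈ X, ∃ y ∈ X, TransGen R x y)
    (hX : X.Nonempty) : ∃ x ∈ X, TransGen R x x := by
  obtain ⟨π, -, hπ, hπX⟩ := exists_path_of_forall_exists h hX.some_mem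
  obtain ⟨m, n, hne, heq⟩ := Finite.exists_ne_map_eq_of_infinite π
  wlog hmn : m < n generalizing m n
  · exact this n m hne.symm heq.symm (hne.lt_or_gt.resolve_left hmn)
  have hloop := transGen_of_path hπ hmn
  rw [transGen_eq_self, ← heq] at hloop
  exact ⟨π m, hπX m, hloop⟩

/-- The sequence `π` preceded by `a`. -/
def consPath (a : S) (π : ℕ → S) : ℕ → S
  | 0 => a
  | n + 1 => π n

theorem consPath_step {a : S} {π : ℕ → S} (ha : R a (π 0)) (hπ : ∀ n, R (π n) (π (n + 1))) :
    ∀ n, R (consPath a π n) (consPath a π (n + 1))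
  | 0 => ha
  | n + 1 => hπ n

theorem exists_path_append {T : S → S → Prop} (hTR : T ≤ R) {a b : S} (hab : ReflTransGen T a b)
    {π : ℕ → S} (hπb : π 0 = b) (hπ : ∀ n, R (π n) (π (n + 1))) :
    ∃ ρ : ℕ → S, ρ 0 = a ∧ (∀ n, R (ρ n) (ρ (n + 1))) ∧
      ∃ i, (∀ n, ρ (i + n) = π n) ∧ ∀ j < i, T (ρ j) (ρ (j + 1)) := by
  induction hab using ReflTransGen.head_induction_on with
  | refl => exact ⟨π, hπb, hπ, 0, fun n => by rw [zero_add], fun j hj => absurd hj j.not_lt_zero⟩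
  | @head a c hac _ ih =>
    obtain ⟨ρ, rfl, hρ, i, hρπ, hT⟩ := ih
    refine ⟨consPath a ρ, rfl, consPath_step (hTR _ _ hac) hρ, i + 1, fun n => ?_, ?_⟩
    · rw [Nat.add_right_comm]
      exact hρπ n
    · rintro (_ | j) hj
      exacts [hac, hT j (Nat.lt_of_succ_lt_succ hj)]

theorem exists_path (hR : ∀ s, ∃ t, R s t) (a : S) :
    ∃ π : ℕ → S, π 0 = a ∧ ∀ n, R (π n) (π (n + 1)) := by
  obtain ⟨π, hπa, hπ, -⟩ :=
    exists_path_of_forall_exists (X := Set.univ) (fun x _ => by simpa using hR x) (Set.mem_univ a)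
  exact ⟨π, hπa, hπ⟩

theorem exists_path_visiting_list (hR : ∀ s, ∃ t, R s t) {a : S} {l : List S}
    (hl : (a :: l).IsChain (ReflTransGen R)) :
    ∃ π : ℕ → S, π 0 = a ∧ (∀ n, R (π n) (π (n + 1))) ∧ ∀ t ∈ l, ∃ n, π n = t := by
  induction l generalizing a with
  | nil =>
    obtain ⟨π, hπa, hπ⟩ := exists_path hR a
    exact ⟨π, hπa, hπ, fun t ht => absurd ht List.not_mem_nil⟩
  | cons b l ih =>
    obtain ⟨hab, hl⟩ := List.isChain_cons_cons.mp hl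
    obtain ⟨π, hπb, hπ, hπl⟩ := ih hl
    obtain ⟨ρ, hρa, hρ, i, hρπ, -⟩ := exists_path_append le_rfl hab hπb hπ
    refine ⟨ρ, hρa, hρ, List.forall_mem_cons.mpr ⟨⟨i, (hρπ 0).trans hπb⟩, fun t ht => ?_⟩⟩
    obtain ⟨n, rfl⟩ := hπl t ht
    exact ⟨i + n, hρπ n⟩

theorem exists_path_visiting_all [Finite S] (hR : ∀ s, ∃ t, R s t) {a : S}
    (ha : ∀ x, ReflTransGen R a x) (htotal : ∀ x y, ReflTransGen R x y ∨ ReflTransGen R y x) :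
    ∃ π : ℕ → S, π 0 = a ∧ (∀ n, R (π n) (π (n + 1))) ∧ ∀ t, ∃ n, π n = t := by
  classical
  have := Fintype.ofFinite S
  have : Std.Total (ReflTransGen R) := ⟨htotal⟩
  let l := (Finset.univ : Finset S).toList.insertionSort (ReflTransGen R)
  have hl : (a :: l).Pairwise (ReflTransGen R) :=
    List.pairwise_cons.mpr ⟨fun x _ => ha x, List.pairwise_insertionSort _ _⟩
  obtain ⟨π, hπa, hπ, hπl⟩ := exists_path_visiting_list hR hl.isChain
  exact ⟨π, hπa, hπ, fun t => hπl t (by simp [l])⟩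

theorem path_mod {π : ℕ → S} (hπ : ∀ n, R (π n) (π (n + 1))) {j : ℕ} (hj : 0 < j)
    (hclosed : π j = π 0) (n : ℕ) : R (π (n % j)) (π ((n + 1) % j)) := by
  have hlt := Nat.mod_lt n hj
  rw [← Nat.mod_add_mod]
  obtain hlast | hlast := (Nat.succ_le_of_lt hlt).eq_or_lt
  · rw [show n % j + 1 = j from hlast, Nat.mod_self, ← hclosed]
    simpa only [show n % j + 1 = j from hlast] using hπ (n % j)
  · rw [Nat.mod_eq_of_lt hlast]
    exact hπ _

theorem exists_periodic_path (hR : ∀ s, ∃ t, R s t) {a : S} (ha : TransGen R a a) :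
    ∃ j > 0, ∃ π : ℕ → S, π 0 = a ∧ (∀ n, R (π n) (π (n + 1))) ∧ Function.Periodic π j := by
  obtain ⟨b, hab, hba⟩ := TransGen.head'_iff.mp ha
  obtain ⟨ρ, hρa, hρ⟩ := exists_path hR a
  obtain ⟨σ, hσb, hσ, i, hσρ, -⟩ := exists_path_append le_rfl hba hρa hρ
  have hclosed : consPath a σ (i + 1) = a := (hσρ 0).trans hρa
  refine ⟨i + 1, i.succ_pos, fun n => consPath a σ (n % (i + 1)), ?_,
    path_mod (consPath_step (hσb ▸ hab) hσ) i.succ_pos hclosed, fun n => ?_⟩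
  · simp only [Nat.zero_mod, consPath]
  · simp only [Nat.add_mod_right]

theorem periodic_of_dvd {π : ℕ → S} {j ℓ : ℕ} (h : Function.Periodic π j) (hjℓ : j ∣ ℓ) :
    Function.Periodic π ℓ := by
  obtain ⟨k, rfl⟩ := hjℓ
  simpa [mul_comm] using h.nat_mul k

theorem exists_common_period [Finite S] (hR : ∀ s, ∃ t, R s t) :
    ∃ ℓ > 0, ∀ a, TransGen R a a →
      ∃ π : ℕ → S, π 0 = a ∧ (∀ n, R (π n) (π (n + 1))) ∧ Function.Periodic π ℓ := by
  have := Fintype.ofFinite S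
  have hlocal : ∀ a, ∃ j > 0, TransGen R a a →
      ∃ π : ℕ → S, π 0 = a ∧ (∀ n, R (π n) (π (n + 1))) ∧ Function.Periodic π j := by
    intro a
    by_cases ha : TransGen R a a
    · exact (exists_periodic_path hR ha).imp fun j => And.imp_right fun h _ => h
    · exact ⟨1, one_pos, fun h => absurd h ha⟩
  choose j hj hπ using hlocal
  refine ⟨∏ a, j a, Finset.prod_pos fun a _ => hj a, fun a ha => ?_⟩
  obtain ⟨π, hπa, hπR, hper⟩ := hπ a ha
  exact ⟨π, hπa, hπR, periodic_of_dvd hper (Finset.dvd_prod_of_mem j (Finset.mem_univ a))⟩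

theorem InitKripke.reflTransGen_s0 {Atom : Type u} (K : InitKripke Atom) (x : K.State) :
    ReflTransGen K.R K.s0 x := by
  obtain ⟨π, hπ0, hπ, hall⟩ := K.initial
  obtain ⟨n, rfl⟩ := hall x
  exact hπ0 ▸ reflTransGen_of_path hπ n.zero_le

theorem InitKripke.reflTransGen_total {Atom : Type u} (K : InitKripke Atom) (x y : K.State) :
    ReflTransGen K.R x y ∨ ReflTransGen K.R y x := by
  obtain ⟨π, -, hπ, hall⟩ := K.initial
  obtain ⟨m, rfl⟩ := hall x
  obtain ⟨n, rfl⟩ := hall y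
  exact (le_total m n).imp (reflTransGen_of_path hπ) (reflTransGen_of_path hπ)

end Paths

section GradedSimulation

open Relation

variable {Atom : Type u} {A B : Kripke Atom}

/-- The nesting depth of temporal operators. -/
def CTL.depth : CTL Atom → ℕ
  | .bot => 0
  | .top => 0
  | .atom _ => 0
  | .neg φ => depth φ
  | .or φ ψ => max (depth φ) (depth ψ)
  | .EX φ => depth φ + 1
  | .EG φ => depth φ + 1
  | .EU φ ψ => max (depth φ) (depth ψ) + 1

theorem sat_EU_of_reflTransGen {φ ψ : CTL Atom} {s t : A.State}
    (hst : ReflTransGen (fun x y => Sat A φ x ∧ A.R x y) s t) (ht : Sat A ψ t) :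
    Sat A (.EU φ ψ) s := by
  obtain ⟨π, hπt, hπ⟩ := exists_path A.serial t
  obtain ⟨ρ, hρs, hρ, i, hρπ, hφ⟩ := exists_path_append (fun _ _ h => h.2) hst hπt hπ
  have hi : ρ i = t := (hρπ 0).trans hπt
  exact ⟨ρ, hρs, hρ, i, hi ▸ ht, fun j hj => (hφ j hj).1⟩

theorem sat_EG_of_forall_exists_transGen {φ : CTL Atom} {X : Set A.State}
    (h : ∀ x ∈ X, ∃ y ∈ X, TransGen (fun x y => Sat A φ x ∧ A.R x y) x y) {s : A.State}
    (hs : s ∈ X) : Sat A (.EG φ) s := by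
  obtain ⟨π, hπs, hπ⟩ := exists_path_of_forall_exists_transGen h hs
  exact ⟨π, hπs, fun n => (hπ n).2, fun n => (hπ n).1⟩

/-- An `R`-step whose source is `Z`-related to one of the first `n` states of `π`. -/
def GuardedStep {α β : Type*} (R : β → β → Prop) (Z : α → β → Prop) (π : ℕ → α) (n : ℕ)
    (x y : β) : Prop :=
  (∃ j < n, Z (π j) x) ∧ R x y

theorem GuardedStep.mono {α β : Type*} {R : β → β → Prop} {Z : α → β → Prop} {π : ℕ → α} {m n : ℕ}
    (h : m ≤ n) : GuardedStep R Z π m ≤ GuardedStep R Z π n := fun _ _ hxy =>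
  ⟨hxy.1.imp fun _ hj => ⟨hj.1.trans_le h, hj.2⟩, hxy.2⟩

/-- `B` mimics from `b` a nonempty initial block `π 0, …, π n` of the path `π`: `π n` is matched by
the stronger relation `Z'`, every state inside the block by the weaker relation `Z`, and the states
passed on the way are matched by earlier states of `π`. -/
def MatchesBlock (Z Z' : A.State → B.State → Prop) (π : ℕ → A.State) (b : B.State) : Prop :=
  ∃ n, 0 < n ∧ (∀ m < n, ∃ t, ReflTransGen (GuardedStep B.R Z π m) b t ∧ Z (π m) t) ∧
    ∃ b', TransGen (GuardedStep B.R Z π n) b b' ∧ Z' (π n) b'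

/-- Simulations `Z 0, …, Z D` of `A` by `B` graded by the temporal depth they preserve, with respect
to the atoms in `X`. A single step costs one level. Along a path no level may be lost, but then the
matching is only block by block. -/
structure GradedSim (X : Set Atom) (D : ℕ) (A B : Kripke Atom)
    (Z : ℕ → A.State → B.State → Prop) : Prop where
  label : ∀ {d a b q}, Z d a b → q ∈ X → (q ∈ A.L a ↔ q ∈ B.L b)
  next : ∀ {d a a' b}, d < D → Z (d + 1) a b → A.R a a' → ∃ b', B.R b b' ∧ Z d a' b'
  block : ∀ {d b} {π : ℕ → A.State}, d < D → (∀ n, A.R (π n) (π (n + 1))) → Z (d + 1) (π 0) b →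
    MatchesBlock (Z d) (Z (d + 1)) π b

namespace GradedSim

variable {X : Set Atom} {D : ℕ} {Z : ℕ → A.State → B.State → Prop} {d : ℕ} {φ ψ : CTL Atom}

theorem sat_EU (h : GradedSim X D A B Z) (hd : d < D)
    (hφ : ∀ a b, Z d a b → Sat A φ a → Sat B φ b) (hψ : ∀ a b, Z d a b → Sat A ψ a → Sat B ψ b)
    {a : A.State} {b : B.State} (hab : Z (d + 1) a b) (ha : Sat A (.EU φ ψ) a) :
    Sat B (.EU φ ψ) b := by
  obtain ⟨π, rfl, hπ, i, hψi, hφi⟩ := ha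
  suffices ∃ t, ReflTransGen (fun x y => Sat B φ x ∧ B.R x y) b t ∧ Sat B ψ t by
    obtain ⟨t, hbt, ht⟩ := this
    exact sat_EU_of_reflTransGen hbt ht
  induction i using Nat.strong_induction_on generalizing π b with
  | _ i ih =>
    obtain ⟨n, hn, hinner, b', hbb', hab'⟩ := h.block hd hπ hab
    have hguard : ∀ m ≤ i, GuardedStep B.R (Z d) π m ≤ fun x y => Sat B φ x ∧ B.R x y := by
      rintro m hm x y ⟨⟨j, hj, hZ⟩, hR⟩
      exact ⟨hφ _ _ hZ (hφi j (hj.trans_le hm)), hR⟩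
    obtain hin | hni := lt_or_ge i n
    · obtain ⟨t, hbt, ht⟩ := hinner i hin
      exact ⟨t, ReflTransGen.mono (hguard i le_rfl) _ _ hbt, hψ _ _ ht hψi⟩
    · obtain ⟨t, hb't, ht⟩ := ih (i - n) (Nat.sub_lt (hn.trans_le hni) hn) (fun k => π (n + k)) hab'
        (fun k => hπ (n + k)) (by rwa [Nat.add_sub_cancel' hni])
        (fun j hj => hφi (n + j) (by omega))
      exact ⟨t, (TransGen.mono (hguard n hni) _ _ hbb').to_reflTransGen.trans hb't, ht⟩

theorem sat_EG (h : GradedSim X D A B Z) (hd : d < D)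
    (hφ : ∀ a b, Z d a b → Sat A φ a → Sat B φ b) {a : A.State} {b : B.State}
    (hab : Z (d + 1) a b) (ha : Sat A (.EG φ) a) : Sat B (.EG φ) b := by
  obtain ⟨π, rfl, hπ, hall⟩ := ha
  refine sat_EG_of_forall_exists_transGen (X := {b | ∃ k, Z (d + 1) (π k) b}) ?_ ⟨0, hab⟩
  rintro x ⟨k, hk⟩
  obtain ⟨n, -, -, b', hxb', hab'⟩ := h.block hd (fun i => hπ (k + i)) hk
  refine ⟨b', ⟨k + n, hab'⟩, TransGen.mono ?_ _ _ hxb'⟩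
  rintro y z ⟨⟨j, -, hZ⟩, hR⟩
  exact ⟨hφ _ _ hZ (hall _), hR⟩

theorem sat_EX (h : GradedSim X D A B Z) (hd : d < D)
    (hφ : ∀ a b, Z d a b → Sat A φ a → Sat B φ b) {a : A.State} {b : B.State}
    (hab : Z (d + 1) a b) (ha : Sat A (.EX φ) a) : Sat B (.EX φ) b := by
  obtain ⟨a', haa', ha'⟩ := ha
  obtain ⟨b', hbb', hab'⟩ := h.next hd hab haa'
  exact ⟨b', hbb', hφ _ _ hab' ha'⟩

theorem sat_iff (h : GradedSim X D A B Z) (h' : GradedSim X D B A fun d b a => Z d a b)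
    (hX : φ.vars ⊆ X) (hφd : φ.depth ≤ d) (hd : d ≤ D) {a : A.State} {b : B.State}
    (hab : Z d a b) : Sat A φ a ↔ Sat B φ b := by
  induction φ generalizing d a b with
  | bot => exact Iff.rfl
  | top => exact Iff.rfl
  | atom q => exact h.label hab (hX rfl)
  | neg φ ih => exact not_congr (ih hX hφd hd hab)
  | or φ ψ ihφ ihψ =>
    exact or_congr (ihφ (Set.union_subset_iff.mp hX).1 (max_le_iff.mp hφd).1 hd hab)
      (ihψ (Set.union_subset_iff.mp hX).2 (max_le_iff.mp hφd).2 hd hab)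
  | EX φ ih =>
    obtain _ | d := d
    · exact absurd hφd (Nat.not_succ_le_zero _)
    · have ih : ∀ a b, Z d a b → (Sat A φ a ↔ Sat B φ b) :=
        fun _ _ => ih hX (Nat.le_of_succ_le_succ hφd) (Nat.le_of_succ_le hd)
      exact ⟨h.sat_EX hd (fun a b hab => (ih a b hab).mp) hab,
        h'.sat_EX hd (fun b a hab => (ih a b hab).mpr) hab⟩
  | EG φ ih =>
    obtain _ | d := d
    · exact absurd hφd (Nat.not_succ_le_zero _)
    · have ih : ∀ a b, Z d a b → (Sat A φ a ↔ Sat B φ b) :=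
        fun _ _ => ih hX (Nat.le_of_succ_le_succ hφd) (Nat.le_of_succ_le hd)
      exact ⟨h.sat_EG hd (fun a b hab => (ih a b hab).mp) hab,
        h'.sat_EG hd (fun b a hab => (ih a b hab).mpr) hab⟩
  | EU φ ψ ihφ ihψ =>
    obtain _ | d := d
    · exact absurd hφd (Nat.not_succ_le_zero _)
    · obtain ⟨hφ, hψ⟩ := max_le_iff.mp (Nat.le_of_succ_le_succ hφd)
      have ihφ : ∀ a b, Z d a b → (Sat A φ a ↔ Sat B φ b) :=
        fun _ _ => ihφ (Set.union_subset_iff.mp hX).1 hφ (Nat.le_of_succ_le hd)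
      have ihψ : ∀ a b, Z d a b → (Sat A ψ a ↔ Sat B ψ b) :=
        fun _ _ => ihψ (Set.union_subset_iff.mp hX).2 hψ (Nat.le_of_succ_le hd)
      exact ⟨h.sat_EU hd (fun a b hab => (ihφ a b hab).mp) (fun a b hab => (ihψ a b hab).mp) hab,
        h'.sat_EU hd (fun b a hab => (ihφ a b hab).mpr) (fun b a hab => (ihψ a b hab).mpr) hab⟩

end GradedSim

end GradedSimulation

section PulseStructure

open Relation

variable {Atom : Type u}

/-- A closed walk of length `L` in `K` (a bi-infinite walk if `L = 0`) whose `W`-bisimilarity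
classes repeat with period `ℓ`. -/
structure Loop (W : Set Atom) (K : Kripke Atom) (ℓ L : ℕ) where
  toFun : ZMod L → K.State
  step : ∀ i, K.R (toFun i) (toFun (i + 1))
  bisimClass_add : ∀ i, bisimClass W K (toFun (i + ℓ)) = bisimClass W K (toFun i)

variable {W : Set Atom} {K : Kripke Atom} {ℓ L : ℕ}

namespace Loop

instance : CoeFun (Loop W K ℓ L) fun _ => ZMod L → K.State := ⟨toFun⟩

instance [NeZero L] : Finite (Loop W K ℓ L) :=
  Finite.of_injective toFun fun c c' h => by cases c; cases c'; congr

theorem reflTransGen [NeZero L] (c : Loop W K ℓ L) (i j : ZMod L) :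
    ReflTransGen K.R (c i) (c j) := by
  have hpath : ∀ n : ℕ, K.R (c (i + n)) (c (i + (n + 1 : ℕ))) := fun n => by
    simpa only [Nat.cast_succ, add_assoc] using c.step (i + n)
  simpa using reflTransGen_of_path (π := fun n : ℕ => c (i + n)) hpath (j - i).val.zero_le

theorem step_of_dvd_succ (c : Loop W K ℓ L) {r : ℕ} (h : L ∣ r + 1) :
    K.R (c 0) (c (-(r : ZMod L))) := by
  have hr : -(r : ZMod L) = 1 :=
    neg_eq_of_add_eq_zero_right (by exact_mod_cast (ZMod.natCast_eq_zero_iff _ _).mpr h)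
  simpa only [hr, zero_add] using c.step 0

/-- The loop traced by a path with period `L`. -/
def ofPath [NeZero L] (π : ℕ → K.State) (hπ : ∀ n, K.R (π n) (π (n + 1)))
    (hL : Function.Periodic π L)
    (hℓ : ∀ n, bisimClass W K (π (n + ℓ)) = bisimClass W K (π n)) : Loop W K ℓ L where
  toFun i := π i.val
  step i := by
    have hsucc : i + 1 = ((i.val + 1 : ℕ) : ZMod L) := by simp
    rw [hsucc, ZMod.val_natCast, hL.map_mod_nat]
    exact hπ _
  bisimClass_add i := by
    have hadd : i + ℓ = ((i.val + ℓ : ℕ) : ZMod L) := by simp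
    rw [hadd, ZMod.val_natCast, hL.map_mod_nat, hℓ]

theorem periodic_bisimClass (c : Loop W K ℓ L) :
    Function.Periodic (fun n : ℕ => bisimClass W K (c n)) ℓ := fun n => by
  simpa only [Nat.cast_add] using c.bisimClass_add n

theorem bisimClass_neg [NeZero L] (c : Loop W K ℓ L) {m n : ℕ} (h : ℓ ∣ m + n) :
    bisimClass W K (c (-(m : ZMod L))) = bisimClass W K (c n) := by
  have hadd := periodic_of_dvd c.periodic_bisimClass h (-(m : ZMod L)).val
  simpa using hadd.symm

theorem exists_lt_bisimClass_eq [NeZero L] (c : Loop W K ℓ L) (hℓ : 0 < ℓ) (i : ZMod L) :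
    ∃ n < ℓ, bisimClass W K (c n) = bisimClass W K (c i) := by
  refine ⟨i.val % ℓ, Nat.mod_lt _ hℓ, ?_⟩
  simpa using c.periodic_bisimClass.map_mod_nat i.val

end Loop

/-- Distinct distances `gap c` coding the elements `c` of `ι`, all of them multiples of `L`
between the bounds `H` and `M`. -/
structure GapCode (ι : Type*) (L H M : ℕ) where
  gap : ι → ℕ
  gap_injective : Function.Injective gap
  dvd_gap : ∀ c, L ∣ gap c
  lt_gap : ∀ c, H < gap c
  gap_lt : ∀ c, gap c < M
  dvd_bound : L ∣ M
  lt_bound : H < M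

theorem exists_gapCode (ι : Type*) [Finite ι] {L : ℕ} (hL : 0 < L) (H : ℕ) {k : ℕ}
    (hk : Nat.card ι ≤ k) : Nonempty (GapCode ι L H (L * (H + 1 + k))) := by
  let e : ι ≃ Fin (Nat.card ι) := Finite.equivFin ι
  have hH : ∀ n, H < L * (H + 1 + n) := fun n =>
    (by omega : H < H + 1 + n).trans_le (Nat.le_mul_of_pos_left _ hL)
  refine ⟨⟨fun c => L * (H + 1 + e c), fun c c' h => ?_, fun c => dvd_mul_right _ _, fun c => hH _,
    fun c => ?_, dvd_mul_right _ _, hH k⟩⟩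
  · have := Nat.eq_of_mul_eq_mul_left hL h
    exact e.injective (Fin.ext (by omega))
  · exact Nat.mul_lt_mul_of_pos_left (by have := (e c).isLt; omega) hL

theorem GapCode.neZero {ι : Type*} {L H M : ℕ} (P : GapCode ι L H M) : NeZero L :=
  ⟨(Nat.pos_of_dvd_of_pos P.dvd_bound (Nat.zero_lt_of_lt P.lt_bound)).ne'⟩

/-- States of the pulse structure over `K`: the states of `K`, and for each loop `c` a cycle of
positions that count down to a pulse. -/
inductive PulseState (W : Set Atom) (K : Kripke Atom) (ℓ L M : ℕ)
  | base (s : K.State)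
  | loop (c : Loop W K ℓ L) (r : Fin M)

namespace PulseState

variable {M : ℕ}

/-- The state of `K` that a state of the pulse structure simulates; loops are timed so as to be at
`c 0` when the countdown ends. -/
def proj : PulseState W K ℓ L M → K.State
  | base s => s
  | loop c r => c (-((r : ℕ) : ZMod L))

/-- The number of steps to the next pulse if the current loop is not left; `M` outside loops. -/
def countdown : PulseState W K ℓ L M → ℕ
  | base _ => M
  | loop _ r => r

theorem countdown_le (x : PulseState W K ℓ L M) : x.countdown ≤ M := by
  cases x with
  | base => exact le_rfl
  | loop c r => exact r.isLt.le

theorem finite [NeZero L] : Finite (PulseState W K ℓ L M) :=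
  Finite.of_surjective (Sum.elim base fun x : Loop W K ℓ L × Fin M => loop x.1 x.2) <| by
    rintro (s | ⟨c, r⟩)
    exacts [⟨.inl s, rfl⟩, ⟨.inr (c, r), rfl⟩]

end PulseState

variable {H M : ℕ}

open PulseState

/-- Transitions of the pulse structure. Loops may be left, and entered at the top of their
countdown, whenever `K` allows it; a loop `c` that is never left pulses every `gap c` steps. -/
inductive PulseStep (P : GapCode (Loop W K ℓ L) L H M) :
    PulseState W K ℓ L M → PulseState W K ℓ L M → Prop
  | leave {x t} : K.R x.proj t → PulseStep P x (base t)
  | enter {x c} {r : Fin M} : x.proj = c 0 → (r : ℕ) + 1 = M → PulseStep P x (loop c r)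
  | tick {c} {r r' : Fin M} : (r : ℕ) = r' + 1 → PulseStep P (loop c r) (loop c r')
  | reset {c} {r r' : Fin M} : (r : ℕ) = 0 → (r' : ℕ) + 1 = P.gap c →
      PulseStep P (loop c r) (loop c r')

namespace PulseStep

variable {P : GapCode (Loop W K ℓ L) L H M} {x y : PulseState W K ℓ L M}

theorem proj_step (h : PulseStep P x y) : K.R x.proj y.proj := by
  cases h with
  | leave h => exact h
  | @enter _ c r hx hr =>
    rw [hx]
    exact c.step_of_dvd_succ (hr.symm ▸ P.dvd_bound)
  | @tick c r r' h =>
    have hr : -((r : ℕ) : ZMod L) + 1 = -((r' : ℕ) : ZMod L) := by rw [h]; push_cast; ring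
    simpa only [proj, hr] using c.step (-((r : ℕ) : ZMod L))
  | @reset c r r' hr hr' =>
    have hr0 : -((r : ℕ) : ZMod L) = 0 := by rw [hr, Nat.cast_zero, neg_zero]
    simpa only [proj, hr0] using c.step_of_dvd_succ (hr' ▸ P.dvd_gap c)

theorem countdown_le_succ (h : PulseStep P x y) : x.countdown ≤ y.countdown + 1 := by
  cases h with
  | leave => exact x.countdown_le.trans M.le_succ
  | enter _ hr => exact x.countdown_le.trans hr.ge
  | tick h => exact h.le
  | reset hr => exact hr.le.trans (Nat.zero_le _)

theorem exists_loop_of_lt (h : PulseStep P x y) (hy : y.countdown + 1 < M) :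
    ∃ c, ∃ r r' : Fin M, x = loop c r ∧ y = loop c r' ∧
      ((r : ℕ) = r' + 1 ∨ (r : ℕ) = 0 ∧ (r' : ℕ) + 1 = P.gap c) := by
  cases h with
  | leave => exact absurd (M.lt_succ_self.trans hy) (lt_irrefl _)
  | enter _ hr => exact absurd (hr.symm.trans_lt hy) (lt_irrefl _)
  | tick hr => exact ⟨_, _, _, rfl, rfl, .inl hr⟩
  | reset hr hr' => exact ⟨_, _, _, rfl, rfl, .inr ⟨hr, hr'⟩⟩

theorem le_countdown_or_tick (h : PulseStep P x y) :
    H ≤ y.countdown ∨ ∃ c, ∃ r r' : Fin M, x = loop c r ∧ y = loop c r' ∧ (r : ℕ) = r' + 1 := by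
  by_cases hy : y.countdown + 1 < M
  · obtain ⟨c, r, r', rfl, rfl, hr | ⟨-, hr'⟩⟩ := h.exists_loop_of_lt hy
    · exact .inr ⟨c, r, r', rfl, rfl, hr⟩
    · exact .inl (Nat.le_of_lt_succ ((P.lt_gap c).trans_eq hr'.symm))
  · exact .inl (Nat.le_of_lt_succ (P.lt_bound.trans_le (not_lt.mp hy)))

end PulseStep

/-- The pulse structure over `K`: it unravels `K` but erases the atoms of `V`, all of which hold
exactly at the pulses, that is, where a countdown ends. -/
def pulse (V : Set Atom) (P : GapCode (Loop W K ℓ L) L H M) : Kripke Atom where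
  State := PulseState W K ℓ L M
  stateFinite := have := P.neZero; PulseState.finite
  stateNonempty := K.stateNonempty.map base
  R := PulseStep P
  serial x := (K.serial x.proj).elim fun t h => ⟨base t, .leave h⟩
  L x := V.ite {_q | x.countdown = 0} (K.L x.proj)

namespace pulse

variable {V : Set Atom} {P : GapCode (Loop W K ℓ L) L H M}

theorem mem_label_iff {x : PulseState W K ℓ L M} {q : Atom} (hq : q ∈ V) :
    q ∈ (pulse V P).L x ↔ x.countdown = 0 := by
  simp [pulse, Set.ite, hq]

theorem vbisim_proj (x : PulseState W K ℓ L M) :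
    VBisim V ⟨pulse V P, x⟩ ⟨K, x.proj⟩ := by
  refine VBisim.of_isBisimulation (A := pulse V P) (fun x s => PulseState.proj x = s) ?_ ?_ ?_ rfl
  · rintro x _ rfl
    exact Set.ite_sdiff_self _ _ _
  · rintro x _ y rfl hxy
    exact ⟨_, PulseStep.proj_step hxy, rfl⟩
  · rintro x _ t rfl ht
    exact ⟨base t, .leave ht, rfl⟩

theorem reflTransGen_base {s t : K.State} (h : ReflTransGen K.R s t) :
    ReflTransGen (PulseStep P) (base s) (base t) :=
  h.lift base fun _ _ hst => .leave hst

theorem reflTransGen_countdown {T : PulseState W K ℓ L M → PulseState W K ℓ L M → Prop}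
    {c : Loop W K ℓ L} {m n : ℕ} (hmn : m ≤ n) (hn : n < M)
    (hT : ∀ r r' : Fin M, (r : ℕ) = r' + 1 → r ≤ n → m ≤ r' → T (loop c r) (loop c r')) :
    ReflTransGen T (loop c ⟨n, hn⟩) (loop c ⟨m, hmn.trans_lt hn⟩) := by
  induction n, hmn using Nat.le_induction with
  | base => exact .refl
  | succ n hmn ih =>
    exact .head (hT ⟨n + 1, hn⟩ ⟨n, Nat.lt_of_succ_lt hn⟩ rfl le_rfl hmn) <|
      ih _ fun r r' h hr => hT r r' h (hr.trans n.le_succ)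

theorem reflTransGen_base_proj (x : PulseState W K ℓ L M) :
    ReflTransGen (PulseStep P) x (base x.proj) := by
  have := P.neZero
  cases x with
  | base s => exact .refl
  | loop c r => exact .head (.leave (c.step _)) (reflTransGen_base (c.reflTransGen _ _))

theorem reflTransGen_of_base_proj (x : PulseState W K ℓ L M) :
    ReflTransGen (PulseStep P) (base x.proj) x := by
  have := P.neZero
  cases x with
  | base s => exact .refl
  | loop c r =>
    have hM : M - 1 < M := Nat.sub_lt (Nat.zero_lt_of_lt P.lt_bound) one_pos
    calc ReflTransGen (PulseStep P) (base (loop c r).proj) (base (c 0)) :=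
          reflTransGen_base (c.reflTransGen _ _)
      ReflTransGen (PulseStep P) (base (c 0)) (loop c ⟨M - 1, hM⟩) :=
          .single (.enter rfl (Nat.succ_pred_eq_of_pos (Nat.zero_lt_of_lt hM)))
      ReflTransGen (PulseStep P) (loop c ⟨M - 1, hM⟩) (loop c r) :=
          reflTransGen_countdown (Nat.le_sub_one_of_lt r.isLt) hM fun _ _ h _ _ => .tick h

end pulse

/-- The pulse structure over an initial structure, with the same initial state. -/
def InitKripke.pulse {K : InitKripke Atom} (V : Set Atom)
    (P : GapCode (Loop W K.toKripke ℓ L) L H M) : InitKripke Atom where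
  toKripke := _root_.pulse V P
  s0 := base K.s0
  initial := by
    refine exists_path_visiting_all (_root_.pulse V P).serial (fun x => ?_) fun x y => ?_
    · exact (pulse.reflTransGen_base (K.reflTransGen_s0 _)).trans
        (pulse.reflTransGen_of_base_proj x)
    · refine (K.reflTransGen_total (proj x) (proj y)).imp (fun h => ?_) fun h => ?_ <;>
      exact (pulse.reflTransGen_base_proj _).trans <|
        (pulse.reflTransGen_base h).trans (pulse.reflTransGen_of_base_proj _)

end PulseStructure

section Separation

open Relation PulseState

variable {Atom : Type u} {W V₁ V₂ : Set Atom} {p : Atom} {ℓ L H M : ℕ}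

namespace pulse

section

variable {K : Kripke Atom} {P : GapCode (Loop W K ℓ L) L H M} {x y : PulseState W K ℓ L M}

theorem countdown_le_of_vbisim (hp : p ∈ V₁ \ V₂)
    (h : VBisim V₂ ⟨pulse V₁ P, x⟩ ⟨pulse V₁ P, y⟩) : y.countdown ≤ x.countdown := by
  generalize hr : x.countdown = r
  induction r generalizing x y with
  | zero => exact ((mem_label_iff hp.1).mp <| (h.mem_label_iff hp.2).mp <|
      (mem_label_iff hp.1).mpr hr).le
  | succ r ih =>
    cases x with
    | base s => exact hr ▸ y.countdown_le
    | loop c i =>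
      replace hr : (i : ℕ) = r + 1 := hr
      have htick : PulseStep P (loop c i) (loop c ⟨r, by omega⟩) := .tick hr
      obtain ⟨y', hy, hbisim⟩ := h.forth (A := pulse V₁ P) htick
      exact (PulseStep.countdown_le_succ hy).trans (Nat.succ_le_succ (ih hbisim rfl))

theorem countdown_eq_of_vbisim (hp : p ∈ V₁ \ V₂)
    (h : VBisim V₂ ⟨pulse V₁ P, x⟩ ⟨pulse V₁ P, y⟩) : x.countdown = y.countdown :=
  (countdown_le_of_vbisim hp h.symm).antisymm (countdown_le_of_vbisim hp h)

theorem exists_step_of_vbisim (hp : p ∈ V₁ \ V₂) {x' : PulseState W K ℓ L M}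
    (h : VBisim V₂ ⟨pulse V₁ P, x⟩ ⟨pulse V₁ P, y⟩) (hx : PulseStep P x x') :
    ∃ y', PulseStep P y y' ∧ x'.countdown = y'.countdown ∧
      VBisim V₂ ⟨pulse V₁ P, x'⟩ ⟨pulse V₁ P, y'⟩ := by
  obtain ⟨y', hy, hbisim⟩ := h.forth (A := pulse V₁ P) hx
  exact ⟨y', hy, countdown_eq_of_vbisim hp hbisim, hbisim⟩

theorem loop_eq_of_vbisim (hp : p ∈ V₁ \ V₂) {c c' : Loop W K ℓ L} {i i' : Fin M}
    (h : VBisim V₂ ⟨pulse V₁ P, loop c i⟩ ⟨pulse V₁ P, loop c' i'⟩) : c = c' := by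
  have hi : (i : ℕ) = i' := countdown_eq_of_vbisim hp h
  generalize hr : (i : ℕ) = r at hi
  induction r generalizing i i' with
  | zero =>
    have hpos : 0 < P.gap c := Nat.zero_lt_of_lt (P.lt_gap c)
    have hlt : P.gap c - 1 < M := (Nat.sub_le _ _).trans_lt (P.gap_lt c)
    have hreset : PulseStep P (loop c i) (loop c ⟨P.gap c - 1, hlt⟩) :=
      .reset hr (Nat.sub_add_cancel hpos)
    obtain ⟨y, hy, hcount : P.gap c - 1 = y.countdown, -⟩ := exists_step_of_vbisim hp h hreset
    have hgap : y.countdown + 1 = P.gap c := by rw [← hcount, Nat.sub_add_cancel hpos]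
    obtain ⟨d, j, j', hj, rfl, hstep⟩ := hy.exists_loop_of_lt (hgap.trans_lt (P.gap_lt c))
    cases hj
    obtain hstep | ⟨-, hgap'⟩ := hstep
    · exact absurd (hi.trans hstep) (Nat.succ_ne_zero _).symm
    · exact P.gap_injective (hgap.symm.trans hgap')
  | succ r ih =>
    have hlt : r + 1 < M := hr ▸ i.isLt
    have htick : PulseStep P (loop c i) (loop c ⟨r, Nat.lt_of_succ_lt hlt⟩) := .tick hr
    obtain ⟨y, hy, hcount : r = y.countdown, hbisim⟩ := exists_step_of_vbisim hp h htick
    obtain ⟨d, j, j', hj, rfl, -⟩ := hy.exists_loop_of_lt (hcount ▸ hlt)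
    cases hj
    exact ih hbisim rfl hcount

theorem proj_eq_of_vbisim_of_eq_loop (hp : p ∈ V₁ \ V₂)
    (h : VBisim V₂ ⟨pulse V₁ P, x⟩ ⟨pulse V₁ P, y⟩) {c : Loop W K ℓ L} (hx : x.proj = c 0) :
    x.proj = y.proj := by
  have hM : M - 1 + 1 = M := Nat.sub_add_cancel (Nat.zero_lt_of_lt P.lt_bound)
  have henter : PulseStep P x (loop c ⟨M - 1, by omega⟩) := .enter hx hM
  obtain ⟨y', hy, hcount : M - 1 = y'.countdown, hbisim⟩ := exists_step_of_vbisim hp h henter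
  cases y' with
  | base t => exact absurd (hcount.trans (show countdown (base t) = M from rfl)) (by omega)
  | loop c' r =>
    obtain rfl := loop_eq_of_vbisim hp hbisim
    replace hcount : M - 1 = r := hcount
    cases hy with
    | enter hy => exact hx.trans hy.symm
    | @tick _ r' _ hr => exact absurd r'.isLt (by omega)
    | reset _ hr => exact absurd (P.gap_lt c) (by omega)

end

variable {K : InitKripke Atom} {P : GapCode (Loop W K.toKripke ℓ L) L H M}
  {x y : PulseState W K.toKripke ℓ L M}

theorem proj_eq_of_vbisim (hp : p ∈ V₁ \ V₂)
    (hloops : ∀ s, TransGen K.R s s → ∃ c : Loop W K.toKripke ℓ L, c 0 = s)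
    (h : VBisim V₂ ⟨pulse V₁ P, x⟩ ⟨pulse V₁ P, y⟩) : x.proj = y.proj := by
  wlog hxy : ReflTransGen (PulseStep P) x y generalizing x y
  · exact (this h.symm (((K.pulse V₁ P).reflTransGen_total x y).resolve_left hxy)).symm
  obtain rfl | hxy := reflTransGen_iff_eq_or_transGen.mp hxy
  · rfl
  -- The class of `x` is visited infinitely often, hence contains a recurrent state.
  obtain ⟨z, hzx, hz⟩ : ∃ z, VBisim V₂ ⟨pulse V₁ P, z⟩ ⟨pulse V₁ P, x⟩ ∧
      TransGen (PulseStep P) z z := by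
    refine exists_transGen_self (S := (pulse V₁ P).State) (R := PulseStep P)
      (X := {z | VBisim V₂ ⟨pulse V₁ P, z⟩ ⟨pulse V₁ P, x⟩}) (fun z hz => ?_)
      ⟨x, VBisim.refl V₂ ⟨pulse V₁ P, x⟩⟩
    obtain ⟨z', hzz', hyz'⟩ := hz.symm.transGen_forth hxy
    exact ⟨z', (h.trans hyz').symm, hzz'⟩
  obtain ⟨c, hc⟩ := hloops z.proj (hz.lift proj fun _ _ => PulseStep.proj_step)
  exact (proj_eq_of_vbisim_of_eq_loop hp hzx hc.symm).symm.trans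
    (proj_eq_of_vbisim_of_eq_loop hp (hzx.trans h) hc.symm)

end pulse

end Separation

section Hosting

open Relation Nat

variable {Atom : Type u} {W : Set Atom} {A B : Kripke Atom} {ℓ N : ℕ}

theorem exists_lt_le_mul_eq {S : Type*} [Finite S] (hN : Nat.card S ≤ N) (ρ : ℕ → S) (ℓ : ℕ) :
    ∃ m k, 0 < k ∧ k ≤ N ∧ ρ (ℓ * m + ℓ * k) = ρ (ℓ * m) := by
  have := Fintype.ofFinite S
  obtain ⟨i, i', hne, heq⟩ := Fintype.exists_ne_map_eq_of_card_lt
    (fun i : Fin (N + 1) => ρ (ℓ * i))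
    (by rwa [Fintype.card_fin, ← Nat.card_eq_fintype_card, Nat.lt_succ_iff])
  wlog hlt : i < i' generalizing i i'
  · exact this i' i hne.symm heq.symm (hne.lt_or_gt.resolve_left hlt)
  refine ⟨i, i' - i, by omega, by omega, ?_⟩
  rw [← mul_add, Nat.add_sub_cancel' hlt.le]
  exact heq.symm

theorem Loop.exists_bisimClass_eq (c : Loop W A ℓ (ℓ * N !)) (hℓ : 0 < ℓ)
    (hN : Nat.card B.State ≤ N) {s : B.State} (hs : bisimClass W A (c 0) = bisimClass W B s) :
    ∃ c' : Loop W B ℓ (ℓ * N !), (∀ i, bisimClass W A (c i) = bisimClass W B (c' i)) ∧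
      ReflTransGen (fun x y => B.R x y ∧ ∃ i, bisimClass W A (c i) = bisimClass W B x)
        s (c' 0) := by
  have : NeZero (ℓ * N !) := ⟨(Nat.mul_pos hℓ N.factorial_pos).ne'⟩
  obtain ⟨ρ, rfl, hρ, hclass⟩ := VBisim.exists_path (π := fun n : ℕ => c n)
    (fun n => by simpa only [Nat.cast_succ] using c.step n)
    (by simpa only [Nat.cast_zero] using bisimClass_eq.mp hs)
  replace hclass : ∀ n : ℕ, bisimClass W A (c n) = bisimClass W B (ρ n) :=
    fun n => bisimClass_eq.mpr (hclass n)
  -- The lifted walk revisits a state after some `k ≤ N` periods; since `k ∣ N !`, it can then be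
  -- continued as a closed walk of length `ℓ * N !`.
  obtain ⟨m, k, hk, hkN, hclosed⟩ := exists_lt_le_mul_eq hN ρ ℓ
  let σ : ℕ → B.State := fun n => ρ (ℓ * m + n % (ℓ * k))
  have hσ : ∀ n, B.R (σ n) (σ (n + 1)) := path_mod (π := fun n => ρ (ℓ * m + n))
    (fun n => hρ (ℓ * m + n)) (Nat.mul_pos hℓ hk) hclosed
  have hσL : Function.Periodic σ (ℓ * N !) :=
    periodic_of_dvd (j := ℓ * k) (fun n => by simp only [σ, Nat.add_mod_right])
      (Nat.mul_dvd_mul_left ℓ (Nat.dvd_factorial hk hkN))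
  have hσclass : ∀ n : ℕ, bisimClass W A (c n) = bisimClass W B (σ n) := fun n =>
    calc bisimClass W A (c n) = bisimClass W A (c (n % (ℓ * k) : ℕ)) :=
          ((periodic_of_dvd c.periodic_bisimClass (dvd_mul_right ℓ k)).map_mod_nat n).symm
      _ = bisimClass W A (c (n % (ℓ * k) + ℓ * m : ℕ)) :=
          (periodic_of_dvd c.periodic_bisimClass (dvd_mul_right ℓ m) _).symm
      _ = bisimClass W B (σ n) := by rw [Nat.add_comm, hclass]
  refine ⟨.ofPath σ hσ hσL fun n => ?_, fun i => ?_, ?_⟩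
  · rw [← hσclass, ← hσclass]
    exact c.periodic_bisimClass n
  · simpa [Loop.ofPath] using hσclass i.val
  · have hreach := reflTransGen_of_path (π := ρ)
      (R := fun x y => B.R x y ∧ ∃ i, bisimClass W A (c i) = bisimClass W B x)
      (fun n => ⟨hρ n, n, hclass n⟩) (ℓ * m).zero_le
    simpa [Loop.ofPath, σ] using hreach

end Hosting

section Closeness

open Relation PulseState Nat

variable {Atom : Type u} {W : Set Atom} {A B : Kripke Atom} {ℓ L H M m : ℕ}

namespace PulseState

/-- States of two pulse structures with equivalent projections that are both at distance at least
`m` from the next pulse. -/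
structure Far (m : ℕ) (x : PulseState W A ℓ L M) (y : PulseState W B ℓ L M) : Prop where
  bisimClass_proj : bisimClass W A x.proj = bisimClass W B y.proj
  le_left : m ≤ x.countdown
  le_right : m ≤ y.countdown

/-- States of two pulse structures that are either far from the next pulse or at the same position
of equivalent loops. -/
inductive Close (m : ℕ) : PulseState W A ℓ L M → PulseState W B ℓ L M → Prop
  | far {x y} : Far m x y → Close m x y
  | synced {c : Loop W A ℓ L} {c' : Loop W B ℓ L} {r : Fin M} :
      (∀ i, bisimClass W A (c i) = bisimClass W B (c' i)) → Close m (loop c r) (loop c' r)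

variable {x : PulseState W A ℓ L M} {y : PulseState W B ℓ L M}

theorem Far.symm (h : Far m x y) : Far m y x := ⟨h.1.symm, h.3, h.2⟩

theorem Close.symm (h : Close m x y) : Close m y x := by
  cases h with
  | far h => exact .far h.symm
  | synced h => exact .synced fun i => (h i).symm

theorem close_comm : Close m x y ↔ Close m y x := ⟨Close.symm, Close.symm⟩

theorem Close.bisimClass_proj (h : Close m x y) :
    bisimClass W A x.proj = bisimClass W B y.proj := by
  cases h with
  | far h => exact h.bisimClass_proj
  | synced h => exact h _

theorem Close.countdown_eq_zero_iff (h : Close m x y) (hm : 0 < m) :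
    x.countdown = 0 ↔ y.countdown = 0 := by
  cases h with
  | far h => exact iff_of_false (hm.trans_le h.le_left).ne' (hm.trans_le h.le_right).ne'
  | synced => exact Iff.rfl

end PulseState

variable {P : GapCode (Loop W A ℓ L) L H M} {Q : GapCode (Loop W B ℓ L) L H M}
  {x x' : PulseState W A ℓ L M} {y : PulseState W B ℓ L M}

theorem PulseState.Close.mem_label_iff {V₁ V₂ : Set Atom} {q : Atom} (hW : W ⊆ V₁ ∪ V₂)
    (h : Close m x y) (hm : 0 < m) (hq : q ∉ V₂) : q ∈ (pulse V₁ P).L x ↔ q ∈ (pulse V₁ Q).L y := by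
  by_cases hqV : q ∈ V₁
  · rw [pulse.mem_label_iff hqV, pulse.mem_label_iff hqV, h.countdown_eq_zero_iff hm]
  · have hqW : q ∉ W := fun hqW => (hW hqW).elim hqV hq
    calc q ∈ (pulse V₁ P).L x ↔ q ∈ A.L x.proj := (pulse.vbisim_proj x).mem_label_iff hqV
      _ ↔ q ∈ B.L y.proj := (bisimClass_eq.mp h.bisimClass_proj).mem_label_iff hqW
      _ ↔ q ∈ (pulse V₁ Q).L y := ((pulse.vbisim_proj y).mem_label_iff hqV).symm

theorem PulseStep.exists_far (hxy : bisimClass W A x.proj = bisimClass W B y.proj)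
    (h : PulseStep P x x') (hx' : m ≤ x'.countdown) : ∃ y', PulseStep Q y y' ∧ Far m x' y' := by
  obtain ⟨t, ht, hclass⟩ := exists_step_bisimClass_eq hxy h.proj_step
  exact ⟨base t, .leave ht, hclass, hx', hx'.trans x'.countdown_le⟩

theorem PulseStep.exists_close_of_synced {c : Loop W A ℓ L} {c' : Loop W B ℓ L} {r : Fin M}
    (hc : ∀ i, bisimClass W A (c i) = bisimClass W B (c' i)) (h : PulseStep P (loop c r) x')
    (hm : m ≤ H) : ∃ y', PulseStep Q (loop c' r) y' ∧ Close m x' y' := by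
  obtain hx' | ⟨_, r, r', ⟨⟩, rfl, hr⟩ := h.le_countdown_or_tick
  · obtain ⟨y', hy', hfar⟩ := h.exists_far (Q := Q) (y := loop c' r) (hc _) (hm.trans hx')
    exact ⟨y', hy', .far hfar⟩
  · exact ⟨loop c' r', .tick hr, .synced hc⟩

theorem PulseState.Close.exists_step {m' : ℕ} (hxy : Close m x y) (h : PulseStep P x x')
    (hm : m' < m) (hm' : m' ≤ H) : ∃ y', PulseStep Q y y' ∧ Close m' x' y' := by
  cases hxy with
  | far hfar =>
    obtain ⟨y', hy', hfar'⟩ := h.exists_far (Q := Q) (m := m') hfar.bisimClass_proj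
      (Nat.le_of_lt_succ ((hm.trans_le hfar.le_left).trans_le h.countdown_le_succ))
    exact ⟨y', hy', .far hfar'⟩
  | synced hc => exact h.exists_close_of_synced hc hm'

theorem countdown_zero_le_add {π : ℕ → PulseState W A ℓ L M}
    (hπ : ∀ n, PulseStep P (π n) (π (n + 1))) (n : ℕ) :
    (π 0).countdown ≤ (π n).countdown + n := by
  induction n with
  | zero => exact le_rfl
  | succ n ih => have := (hπ n).countdown_le_succ; omega

theorem exists_reflTransGen_far {π : ℕ → PulseState W A ℓ L M}
    (hπ : ∀ n, PulseStep P (π n) (π (n + 1))) (h : Far m (π 0) y) {k : ℕ}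
    (hk : ∀ j ≤ k, m ≤ (π j).countdown) :
    ∃ t, ReflTransGen (GuardedStep (PulseStep Q) (Close m) π k) y t ∧
      Far m (π k) t := by
  induction k with
  | zero => exact ⟨y, .refl, h⟩
  | succ k ih =>
    obtain ⟨t, hyt, ht⟩ := ih fun j hj => hk j (hj.trans k.le_succ)
    obtain ⟨t', htt', ht'⟩ := (hπ k).exists_far (Q := Q) ht.bisimClass_proj (hk (k + 1) le_rfl)
    exact ⟨t', .tail (ReflTransGen.mono (GuardedStep.mono k.le_succ) _ _ hyt)
      ⟨⟨k, k.lt_succ_self, .far ht⟩, htt'⟩, ht'⟩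

theorem exists_loop_of_forall_lt {π : ℕ → PulseState W A ℓ L M}
    (hπ : ∀ n, PulseStep P (π n) (π (n + 1))) {h k : ℕ} (hh : h ≤ H)
    (h0 : h ≤ (π 0).countdown) (hk : 0 < k) (hlt : ∀ j < k, (π (j + 1)).countdown < h) :
    ∃ c, ∀ j ≤ k, ∃ r : Fin M, π j = loop c r ∧ r + j = h := by
  have htick : ∀ j < k, ∃ c, ∃ r r' : Fin M, π j = loop c r ∧ π (j + 1) = loop c r' ∧
      (r : ℕ) = r' + 1 := fun j hj =>
    (hπ j).le_countdown_or_tick.resolve_left ((hlt j hj).trans_le hh).not_ge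
  obtain ⟨c, r, r', hr, hr', hrr'⟩ := htick 0 hk
  have hrh : (r : ℕ) = h := by
    have hlow := hlt 0 hk
    rw [hr'] at hlow
    rw [hr] at h0
    simp only [countdown] at hlow h0
    omega
  refine ⟨c, fun j hj => ?_⟩
  induction j with
  | zero => exact ⟨r, hr, hrh⟩
  | succ j ih =>
    obtain ⟨s, hs, hsh⟩ := ih (Nat.le_of_succ_le hj)
    obtain ⟨_, _, t, hs', ht, hst⟩ := htick j hj
    cases hs.symm.trans hs'
    exact ⟨t, ht, by omega⟩

theorem exists_proj_eq_of_reflTransGen {T : PulseState W B ℓ L M → PulseState W B ℓ L M → Prop}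
    {R : B.State → B.State → Prop} (hM : m ≤ M) (hy : m ≤ y.countdown)
    (hT : ∀ u t, m ≤ u.countdown → R u.proj t → T u (base t)) {t : B.State}
    (h : ReflTransGen R y.proj t) : ∃ u, ReflTransGen T y u ∧ u.proj = t ∧ m ≤ u.countdown := by
  induction h with
  | refl => exact ⟨y, .refl, rfl, hy⟩
  | @tail _ t _ hRt ih =>
    obtain ⟨u, hyu, rfl, hu⟩ := ih
    exact ⟨base t, .tail hyu (hT u t hu hRt), rfl, hM⟩

theorem exists_reflTransGen_loop {T : PulseState W B ℓ L M → PulseState W B ℓ L M → Prop}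
    {c : Loop W B ℓ L} {S : Set B.State} (hm : 0 < m) (hM : m ≤ M) (hy : m ≤ y.countdown)
    (hT : ∀ u u', m ≤ u.countdown → u.proj ∈ S → PulseStep Q u u' → T u u')
    (hS : ∀ i, c i ∈ S) (h : ReflTransGen (fun s t => B.R s t ∧ s ∈ S) y.proj (c 0)) :
    TransGen T y (loop c ⟨m - 1, by omega⟩) := by
  obtain ⟨u, hyu, hu, hmu⟩ := exists_proj_eq_of_reflTransGen (T := T) hM hy
    (fun u t hmu hut => hT u (base t) hmu hut.2 (.leave hut.1)) h
  refine .trans_right hyu (.head' (b := loop c ⟨M - 1, by omega⟩) ?_ ?_)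
  · exact hT _ _ hmu (hu ▸ hS 0) (.enter hu (by simp only; omega))
  · exact pulse.reflTransGen_countdown (by omega) _ fun r r' hr _ hr' =>
      hT _ _ (by simp only [countdown]; omega) (hS _) (.tick hr)

theorem exists_lt_far {π : ℕ → PulseState W A ℓ L M} [NeZero L] {c : Loop W A ℓ L} (hℓ : 0 < ℓ)
    (hdvd : ℓ ∣ m) (hπ : ∀ j ≤ ℓ, ∃ r : Fin M, π j = loop c r ∧ r + j = m + ℓ) {i : ZMod L}
    (hy : bisimClass W A (c i) = bisimClass W B y.proj) (hmy : m ≤ y.countdown) :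
    ∃ j < ℓ, Far m (π j) y := by
  obtain ⟨j, hj, hji⟩ := c.exists_lt_bisimClass_eq hℓ i
  obtain ⟨r, hr, hrj⟩ := hπ j hj.le
  have hclass : bisimClass W A (π j).proj = bisimClass W A (c j) := by
    rw [hr]
    exact c.bisimClass_neg (hrj ▸ hdvd.add (dvd_refl ℓ))
  refine ⟨j, hj, hclass.trans (hji.trans hy), ?_, hmy⟩
  rw [hr]
  simp only [countdown]
  omega

theorem matchesBlock_of_synced {V : Set Atom} {n : ℕ} {π : ℕ → PulseState W A ℓ L M}
    (hπ : ∀ n, PulseStep P (π n) (π (n + 1))) {c : Loop W A ℓ L} {c' : Loop W B ℓ L} {r : Fin M}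
    (h0 : π 0 = loop c r) (hc : ∀ i, bisimClass W A (c i) = bisimClass W B (c' i)) (hn : n ≤ H) :
    MatchesBlock (A := pulse V P) (B := pulse V Q) (Close m) (Close n) π (loop c' r) := by
  have hclose : Close m (π 0) (loop c' r) := h0 ▸ .synced hc
  obtain ⟨y', hy', hclose'⟩ := (h0 ▸ hπ 0).exists_close_of_synced (Q := Q) hc hn
  refine ⟨1, one_pos, fun k hk => ?_, y', .single ⟨⟨0, one_pos, hclose⟩, hy'⟩, hclose'⟩
  obtain rfl := Nat.lt_one_iff.mp hk
  exact ⟨loop c' r, .refl, hclose⟩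

theorem matchesBlock_of_far {V : Set Atom} {n : ℕ} {π : ℕ → PulseState W A ℓ L M}
    (hπ : ∀ n, PulseStep P (π n) (π (n + 1))) (hfar : Far m (π 0) y) {k : ℕ}
    (hk : ∀ j ≤ k, m ≤ (π j).countdown) (hn : n ≤ (π (k + 1)).countdown) :
    MatchesBlock (A := pulse V P) (B := pulse V Q) (Close m) (Close n) π y := by
  refine ⟨k + 1, k.succ_pos, fun i hi => ?_, ?_⟩
  · obtain ⟨t, hyt, ht⟩ := exists_reflTransGen_far (Q := Q) hπ hfar fun j hj =>
      hk j (hj.trans (Nat.le_of_lt_succ hi))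
    exact ⟨t, hyt, .far ht⟩
  · obtain ⟨t, hyt, ht⟩ := exists_reflTransGen_far (Q := Q) hπ hfar hk
    obtain ⟨t', htt', ht'⟩ := (hπ k).exists_far (Q := Q) ht.bisimClass_proj hn
    exact ⟨t', .tail' (ReflTransGen.mono (GuardedStep.mono k.le_succ) _ _ hyt)
      ⟨⟨k, k.lt_succ_self, .far ht⟩, htt'⟩, .far ht'⟩

theorem matchesBlock_of_loop {V : Set Atom} {N n : ℕ}
    {P : GapCode (Loop W A ℓ (ℓ * N !)) (ℓ * N !) H M}
    {Q : GapCode (Loop W B ℓ (ℓ * N !)) (ℓ * N !) H M} {y : PulseState W B ℓ (ℓ * N !) M}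
    (hℓ : 0 < ℓ) (hN : Nat.card B.State ≤ N) (hm : 0 < m) (hdvd : ℓ ∣ m)
    {π : ℕ → PulseState W A ℓ (ℓ * N !) M} (hπ : ∀ n, PulseStep P (π n) (π (n + 1)))
    (hfar : Far m (π 0) y) {c : Loop W A ℓ (ℓ * N !)}
    (hloop : ∀ j ≤ ℓ + 1, ∃ r : Fin M, π j = loop c r ∧ r + j = m + ℓ) :
    MatchesBlock (A := pulse V P) (B := pulse V Q) (Close m) (Close n) π y := by
  have := P.neZero
  have hhigh : ∀ j ≤ ℓ, m ≤ (π j).countdown := fun j hj => by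
    obtain ⟨r, hr, hrj⟩ := hloop j (hj.trans ℓ.le_succ)
    rw [hr]
    simp only [countdown]
    omega
  have hM : m ≤ M := (hhigh 0 ℓ.zero_le).trans (π 0).countdown_le
  refine ⟨ℓ + 1, ℓ.succ_pos, fun k hk => ?_, ?_⟩
  · obtain ⟨t, hyt, ht⟩ := exists_reflTransGen_far (Q := Q) hπ hfar fun j hj =>
      hhigh j (hj.trans (Nat.le_of_lt_succ hk))
    exact ⟨t, hyt, .far ht⟩
  -- The `ℓ` states `π 0, …, π (ℓ - 1)` represent all classes on the loop `c`, so they match all the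
  -- states passed on a detour to an equivalent loop of `B` and down that loop.
  obtain ⟨t, hyt, ht⟩ := exists_reflTransGen_far (Q := Q) hπ hfar hhigh
  obtain ⟨r, hr, hrm⟩ := hloop ℓ ℓ.le_succ
  have hr0 : bisimClass W A (π ℓ).proj = bisimClass W A (c 0) := by
    simpa [hr, proj] using c.bisimClass_neg (m := r) (n := 0)
      (by rwa [Nat.add_zero, Nat.add_right_cancel hrm])
  obtain ⟨c', hcc', hreach⟩ := c.exists_bisimClass_eq hℓ hN (hr0.symm.trans ht.bisimClass_proj)
  have hguard : ∀ u u', m ≤ u.countdown → (∃ i, bisimClass W A (c i) = bisimClass W B u.proj) →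
      PulseStep Q u u' → GuardedStep (PulseStep Q) (Close m) π (ℓ + 1) u u' := by
    rintro u u' hu ⟨i, hi⟩ huu'
    obtain ⟨j, hj, hju⟩ := exists_lt_far hℓ hdvd (fun j hj => hloop j (hj.trans ℓ.le_succ)) hi hu
    exact ⟨⟨j, hj.trans ℓ.lt_succ_self, .far hju⟩, huu'⟩
  refine ⟨loop c' ⟨m - 1, by omega⟩, .trans_right
    (ReflTransGen.mono (GuardedStep.mono ℓ.le_succ) _ _ hyt) ?_, ?_⟩
  · exact exists_reflTransGen_loop (S := {s | ∃ i, bisimClass W A (c i) = bisimClass W B s}) hm hM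
      ht.le_right hguard (fun i => ⟨i, hcc' i⟩) hreach
  · obtain ⟨r', hr', hrm'⟩ := hloop (ℓ + 1) le_rfl
    rw [hr', show r' = ⟨m - 1, by omega⟩ from Fin.ext (by simp only; omega)]
    exact .synced hcc'

theorem PulseState.Close.matchesBlock {V : Set Atom} {N : ℕ}
    {P : GapCode (Loop W A ℓ (ℓ * N !)) (ℓ * N !) H M}
    {Q : GapCode (Loop W B ℓ (ℓ * N !)) (ℓ * N !) H M} {y : PulseState W B ℓ (ℓ * N !) M}
    (hℓ : 0 < ℓ) (hN : Nat.card B.State ≤ N) (hm : 0 < m) (hdvd : ℓ ∣ m) (hmH : m + ℓ ≤ H)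
    {π : ℕ → PulseState W A ℓ (ℓ * N !) M} (hπ : ∀ n, PulseStep P (π n) (π (n + 1)))
    (h : Close (m + ℓ) (π 0) y) :
    MatchesBlock (A := pulse V P) (B := pulse V Q) (Close m) (Close (m + ℓ)) π y := by
  generalize hx : π 0 = x at h
  cases h with
  | synced hc => exact matchesBlock_of_synced hπ hx hc hmH
  | far hfar =>
    obtain ⟨hclass, hleft, hright⟩ := hx ▸ hfar
    have hfar : Far m (π 0) y := ⟨hclass, le_of_add_le_left hleft, le_of_add_le_left hright⟩
    by_cases hescape : ∃ k ≤ ℓ, m + ℓ ≤ (π (k + 1)).countdown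
    · obtain ⟨k, hk, hhigh⟩ := hescape
      refine matchesBlock_of_far hπ hfar (fun j hj => ?_) hhigh
      have := countdown_zero_le_add hπ j
      omega
    · push Not at hescape
      obtain ⟨c, hc⟩ := exists_loop_of_forall_lt hπ hmH hleft ℓ.succ_pos fun j hj =>
        hescape j (Nat.le_of_lt_succ hj)
      exact matchesBlock_of_loop hℓ hN hm hdvd hπ hfar hc

theorem gradedSim_pulse {V₁ V₂ : Set Atom} {N D : ℕ} (hW : W ⊆ V₁ ∪ V₂) (hℓ : 0 < ℓ)
    (hN : Nat.card B.State ≤ N) (hD : ℓ * (D + 1) ≤ H)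
    (P : GapCode (Loop W A ℓ (ℓ * N !)) (ℓ * N !) H M)
    (Q : GapCode (Loop W B ℓ (ℓ * N !)) (ℓ * N !) H M) :
    GradedSim V₂ᶜ D (pulse V₁ P) (pulse V₁ Q) fun d => Close (ℓ * (d + 1)) := by
  have hlt : ∀ d, ℓ * (d + 1) < ℓ * (d + 2) := fun d =>
    Nat.mul_lt_mul_of_pos_left d.succ.lt_succ_self hℓ
  have hle : ∀ {d}, d < D → ℓ * (d + 2) ≤ H := fun hd =>
    (Nat.mul_le_mul_left ℓ (by omega)).trans hD
  exact
    { label := fun h hq => h.mem_label_iff hW (Nat.mul_pos hℓ (Nat.succ_pos _)) hq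
      next := fun hd h hR => h.exists_step hR (hlt _) ((hlt _).le.trans (hle hd))
      block := fun hd hπ h => h.matchesBlock hℓ hN (Nat.mul_pos hℓ (Nat.succ_pos _))
        (dvd_mul_right _ _) (hle hd) hπ }

theorem sat_pulse_iff {V₁ V₂ : Set Atom} {N : ℕ} {χ : CTL Atom} (hW : W ⊆ V₁ ∪ V₂) (hℓ : 0 < ℓ)
    (hA : Nat.card A.State ≤ N) (hB : Nat.card B.State ≤ N) (hχ : CTL.vars χ ∩ V₂ = ∅)
    (hχH : ℓ * (χ.depth + 1) ≤ H) (P : GapCode (Loop W A ℓ (ℓ * N !)) (ℓ * N !) H M)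
    (Q : GapCode (Loop W B ℓ (ℓ * N !)) (ℓ * N !) H M) {s : A.State} {t : B.State}
    (hst : bisimClass W A s = bisimClass W B t) :
    Sat (pulse V₁ P) χ (base s) ↔ Sat (pulse V₁ Q) χ (base t) := by
  have hM : ℓ * (χ.depth + 1) ≤ M := hχH.trans P.lt_bound.le
  have hcomm : (fun d (y : PulseState W B ℓ (ℓ * N !) M) (x : PulseState W A ℓ (ℓ * N !) M) =>
      Close (ℓ * (d + 1)) x y) = fun d => Close (ℓ * (d + 1)) :=
    funext₃ fun _ _ _ => propext close_comm
  refine (gradedSim_pulse hW hℓ hB hχH P Q).sat_iff ?_ ?_ le_rfl le_rfl (.far ⟨hst, hM, hM⟩)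
  · exact hcomm ▸ gradedSim_pulse hW hℓ hA hχH Q P
  · exact Set.subset_compl_iff_disjoint_right.mpr (Set.disjoint_iff_inter_eq_empty.mpr hχ)

end Closeness

section Interpolation

open PulseState Relation Nat

variable {Atom : Type u} {V₁ V₂ W : Set Atom} {p : Atom} {ℓ L H M : ℕ}

/-- The initial structure `J` with the atoms of `U` relabelled by `l`. -/
def InitKripke.relabel (J : InitKripke Atom) (U : Set Atom) (l : J.State → Set Atom) :
    InitKripke Atom :=
  { J with L := fun s => U.ite (l s) (J.L s) }

theorem InitKripke.vbisim_relabel (J : InitKripke Atom) {U V : Set Atom} (hUV : U ⊆ V)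
    (l : J.State → Set Atom) : VBisim V J.toKS (J.relabel U l).toKS := by
  refine VBisim.of_isBisimulation (A := J.toKripke) (B := (J.relabel U l).toKripke) Eq ?_ ?_ ?_ rfl
  · rintro s _ rfl
    ext q
    have hq : q ∉ V → q ∉ U := mt (@hUV q)
    simp only [relabel, Set.ite, Set.mem_sdiff, Set.mem_union, Set.mem_inter_iff]
    tauto
  · rintro s _ s' rfl hs
    exact ⟨s', hs, rfl⟩
  · rintro s _ s' rfl hs
    exact ⟨s', hs, rfl⟩

theorem pulse.exists_relabel_vbisim {K : InitKripke Atom} (hp : p ∈ V₁ \ V₂)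
    (hloops : ∀ s, TransGen K.R s s → ∃ c : Loop W K.toKripke ℓ L, c 0 = s)
    (P : GapCode (Loop W K.toKripke ℓ L) L H M) {J : InitKripke Atom}
    (h : VBisim V₂ J.toKS (K.pulse V₁ P).toKS) :
    ∃ l, VBisim V₂ (J.relabel (V₁ \ V₂) l).toKS K.toKS := by
  let l : J.State → Set Atom := fun s =>
    {q | ∃ x, VBisim V₂ ⟨J.toKripke, s⟩ ⟨pulse V₁ P, x⟩ ∧ q ∈ K.L x.proj}
  have hl : ∀ {s x}, VBisim V₂ ⟨J.toKripke, s⟩ ⟨pulse V₁ P, x⟩ → l s = K.L x.proj := fun hx => by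
    ext q
    refine ⟨?_, fun hq => ⟨_, hx, hq⟩⟩
    rintro ⟨y, hy, hq⟩
    rwa [proj_eq_of_vbisim hp hloops (hx.symm.trans hy)]
  refine ⟨l, VBisim.of_isBisimulation (A := (J.relabel (V₁ \ V₂) l).toKripke) (B := K.toKripke)
    (fun s t => ∃ x, VBisim V₂ ⟨J.toKripke, s⟩ ⟨pulse V₁ P, x⟩ ∧ x.proj = t) ?_ ?_ ?_ ⟨_, h, rfl⟩⟩
  · rintro s _ ⟨x, hx, rfl⟩
    ext q
    have hq : q ∉ V₂ → q ∉ V₁ → (q ∈ J.L s ↔ q ∈ K.L x.proj) := fun hq₂ hq₁ =>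
      (hx.mem_label_iff hq₂).trans ((vbisim_proj x).mem_label_iff hq₁)
    simp only [InitKripke.relabel, Set.ite, hl hx, Set.mem_sdiff, Set.mem_union, Set.mem_inter_iff]
    tauto
  · rintro s _ s' ⟨x, hx, rfl⟩ hs
    obtain ⟨x', hxx', hx'⟩ := hx.forth hs
    exact ⟨x'.proj, PulseStep.proj_step hxx', x', hx', rfl⟩
  · rintro s _ t ⟨x, hx, rfl⟩ ht
    obtain ⟨s', hs, hs'⟩ := hx.symm.forth (A := pulse V₁ P) (s' := base t) (.leave ht)
    exact ⟨s', hs, base t, hs'.symm, rfl⟩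

theorem exists_separated_interpolants (hp : p ∈ V₁ \ V₂) {J K : InitKripke Atom}
    (hJK : VBisim (V₁ ∪ V₂) J.toKS K.toKS) {χ : CTL Atom} (hχ : CTL.vars χ ∩ V₂ = ∅) :
    ∃ P Q : InitKripke Atom, VBisim V₁ J.toKS Q.toKS ∧ (P ∈ CTLMod χ ↔ Q ∈ CTLMod χ) ∧
      ∀ J₁ : InitKripke Atom, VBisim V₂ J₁.toKS P.toKS →
        ∃ J₁' : InitKripke Atom, VBisim V₁ J₁.toKS J₁'.toKS ∧ VBisim V₂ J₁'.toKS K.toKS := by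
  obtain ⟨ℓ, hℓ, hperiod⟩ := exists_common_period K.serial
  let N := max (Nat.card J.State) (Nat.card K.State)
  have hL : 0 < ℓ * N ! := Nat.mul_pos hℓ N.factorial_pos
  have : NeZero (ℓ * N !) := ⟨hL.ne'⟩
  let k := max (Nat.card (Loop (V₁ ∪ V₂) J.toKripke ℓ (ℓ * N !)))
    (Nat.card (Loop (V₁ ∪ V₂) K.toKripke ℓ (ℓ * N !)))
  obtain ⟨Q⟩ := exists_gapCode (Loop (V₁ ∪ V₂) J.toKripke ℓ (ℓ * N !)) hL (ℓ * (χ.depth + 1))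
    (le_max_left _ _ : _ ≤ k)
  obtain ⟨P⟩ := exists_gapCode (Loop (V₁ ∪ V₂) K.toKripke ℓ (ℓ * N !)) hL (ℓ * (χ.depth + 1))
    (le_max_right _ _ : _ ≤ k)
  have hloops : ∀ s, TransGen K.R s s →
      ∃ c : Loop (V₁ ∪ V₂) K.toKripke ℓ (ℓ * N !), c 0 = s := fun s hs => by
    obtain ⟨π, rfl, hπ, hper⟩ := hperiod s hs
    exact ⟨.ofPath π hπ (periodic_of_dvd hper (dvd_mul_right ℓ _)) fun n => by rw [hper n],
      by simp [Loop.ofPath]⟩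
  refine ⟨K.pulse V₁ P, J.pulse V₁ Q, (pulse.vbisim_proj (base J.s0)).symm, ?_, fun J₁ hJ₁ => ?_⟩
  · exact sat_pulse_iff subset_rfl hℓ (le_max_right _ _) (le_max_left _ _) hχ le_rfl P Q
      (bisimClass_eq.mpr hJK.symm)
  · obtain ⟨l, hl⟩ := pulse.exists_relabel_vbisim hp hloops P hJ₁
    exact ⟨J₁.relabel (V₁ \ V₂) l, J₁.vbisim_relabel Set.sdiff_subset l, hl⟩

end Interpolation

section Forgetting

variable {Atom : Type u} {φ ψ : CTL Atom} {V : Set Atom}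

theorem IsForget.mem_iff (h : IsForget φ V ψ) {K : InitKripke Atom} :
    K ∈ CTLMod ψ ↔ ∃ J ∈ CTLMod φ, VBisim V J.toKS K.toKS :=
  Set.ext_iff.mp h.2 K

theorem IsForget.mem_of_mem (h : IsForget φ V ψ) {K : InitKripke Atom} (hK : K ∈ CTLMod φ) :
    K ∈ CTLMod ψ :=
  h.mem_iff.mpr ⟨K, hK, VBisim.refl V _⟩

theorem IsForget.mem_of_vbisim (h : IsForget φ V ψ) {J K : InitKripke Atom}
    (hJK : VBisim V J.toKS K.toKS) (hJ : J ∈ CTLMod ψ) : K ∈ CTLMod ψ := by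
  obtain ⟨I, hI, hIJ⟩ := h.mem_iff.mp hJ
  exact h.mem_iff.mpr ⟨I, hI, hIJ.trans hJK⟩

end Forgetting

theorem forget_modularity_general {Atom : Type u} (φ : CTL Atom) (V₁ V₂ : Set Atom)
    (ψ₁ ψ₂ ψ : CTL Atom) (h₁ : IsForget φ V₁ ψ₁) (h₂ : IsForget ψ₁ V₂ ψ₂)
    (h : IsForget φ (V₁ ∪ V₂) ψ) : CTLEquiv ψ ψ₂ := by
  refine Set.Subset.antisymm (fun K hK => ?_) fun K hK => ?_
  · obtain ⟨J, hJ, hJK⟩ := h.mem_iff.mp hK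
    by_cases hV : V₁ ⊆ V₂
    · rw [Set.union_eq_self_of_subset_left hV] at hJK
      exact h₂.mem_iff.mpr ⟨J, h₁.mem_of_mem hJ, hJK⟩
    obtain ⟨p, hp⟩ := Set.not_subset.mp hV
    obtain ⟨P, Q, hJQ, hPQ, hdecode⟩ := exists_separated_interpolants hp hJK h₂.1
    have hQ : Q ∈ CTLMod ψ₂ := h₂.mem_of_mem (h₁.mem_iff.mpr ⟨J, hJ, hJQ⟩)
    obtain ⟨J₁, hJ₁, hJ₁P⟩ := h₂.mem_iff.mp (hPQ.mpr hQ)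
    obtain ⟨J₁', hJ₁J₁', hJ₁'K⟩ := hdecode J₁ hJ₁P
    exact h₂.mem_iff.mpr ⟨J₁', h₁.mem_of_vbisim hJ₁J₁' hJ₁, hJ₁'K⟩
  · obtain ⟨J₁, hJ₁, hJ₁K⟩ := h₂.mem_iff.mp hK
    obtain ⟨J, hJ, hJJ₁⟩ := h₁.mem_iff.mp hJ₁
    exact h.mem_iff.mpr ⟨J, hJ, hJJ₁.trans_union hJ₁K⟩

/-- Modularity: forgetting `{p} ∪ V` equals forgetting `p` first and then `V`. -/
theorem forget_modularity {Atom : Type u} [Finite Atom] (φ : CTL Atom) (V : Set Atom)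
    (p : Atom) (hp : p ∉ V) (ψ1 ψ2 ψ : CTL Atom)
    (h1 : IsForget φ {p} ψ1) (h2 : IsForget ψ1 V ψ2)
    (h : IsForget φ ({p} ∪ V) ψ) :
    CTLEquiv ψ ψ2 :=
  forget_modularity_general φ {p} V ψ1 ψ2 ψ h1 h2 h
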